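/- Let A be a unital C*-algebra, F ⊂ C₀((0,1),A) and F' ⊂ C([0,1],ℂ) finite subsets, and η > 0. Then there exist a finite subset G ⊂ C₀((0,1),A) consisting of elements vanishing outside (1/3, 2/3) and δ > 0 such that: for every unital C*-algebra E, every unital *-homomorphism θ : C([0,1],ℂ) → E, all *-homomorphisms ν₀, ν₁ : C₀((0,1),A) → E compatible with θ, and every unitary v ∈ E with ‖v ν₀(x) v* − ν₁(x)‖ ≤ δ for all x ∈ G, there exists a completely positive map ρ : C₀((0,1),A) → M₂(E) such that: (i) for every x with x(t) = 0 for all t ∉ (0, 1/3), ρ(x) is the matrix with ν₀(x) in the (1,1) entry and 0 elsewhere; (ii) for every x with x(t) = 0 for all t ∉ (2/3, 1), ρ(x) is the matrix with ν₁(x) in the (1,1) entry and 0 elsewhere; (iii) for every tracial state τ on E with τ∘ν₀ = τ∘ν₁, one has (τ ⊗ Tr₂)(ρ(x)) = τ(ν₀(x)) for all x; (iv) ‖ρ(xy) − ρ(x)ρ(y)‖ ≤ η for all x, y ∈ F; and (v) ‖ρ(h·x) − θ^{⊕2}(h)ρ(x)‖ ≤ η for all x ∈ F and h ∈ F'. 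-/

import Mathlib

open scoped ComplexOrder unitInterval ENNReal

set_option synthInstance.maxHeartbeats 1000000
set_option maxHeartbeats 1000000

noncomputable section

/-- The suspension `C₀((0,1),A)`, realised as the non-unital star subalgebra of `C([0,1],A)`
consisting of the functions vanishing at both endpoints. -/
def susp (A : Type) [CStarAlgebra A] : NonUnitalStarSubalgebra ℂ C(I, A) where
  carrier := {x | x 0 = 0 ∧ x 1 = 0}
  add_mem' hx hy := by
    constructor <;> simp [ContinuousMap.add_apply, hx.1, hx.2, hy.1, hy.2]
  mul_mem' hx hy := by
    constructor <;> simp [ContinuousMap.mul_apply, hx.1, hx.2, hy.1, hy.2]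
  smul_mem' c x hx := by
    constructor <;> simp [ContinuousMap.smul_apply, hx.1, hx.2]
  zero_mem' := by constructor <;> simp
  star_mem' hx := by
    constructor <;> simp [ContinuousMap.star_apply, hx.1, hx.2]

/-- The pointwise product `h·x` of a scalar-valued continuous function on `[0,1]` with an element
of the suspension, which again lies in the suspension. -/
def hsmul {A : Type} [CStarAlgebra A] (h : C(I, ℂ)) (x : susp A) : susp A :=
  ⟨h • (x : C(I, A)), by
    have h0 : (x : C(I, A)) 0 = 0 ∧ (x : C(I, A)) 1 = 0 := x.2
    constructor <;> simp [ContinuousMap.smul_apply', h0.1, h0.2]⟩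

/-- A real-valued continuous function on `[0,1]`, regarded as a complex-valued one. -/
def ofRealCM (f : C(I, ℝ)) : C(I, ℂ) :=
  ⟨fun t => (f t : ℂ), Complex.continuous_ofReal.comp f.continuous⟩

/-- A *-homomorphism `ν : C₀((0,1),A) → E` is compatible with a unital *-homomorphism
`θ : C([0,1]) → E` if `ν(h·x) = θ(h)ν(x) = ν(x)θ(h)` for all `h` and `x`. -/
def Compatible {A E : Type} [CStarAlgebra A] [CStarAlgebra E]
    (θ : C(I, ℂ) →⋆ₐ[ℂ] E) (ν : susp A →⋆ₙₐ[ℂ] E) : Prop :=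
  ∀ (h : C(I, ℂ)) (x : susp A), ν (hsmul h x) = θ h * ν x ∧ ν (hsmul h x) = ν x * θ h

/-- Tracial states on a unital C*-algebra. -/
def IsTracialState {B : Type} [CStarAlgebra B] (τ : B →L[ℂ] ℂ) : Prop :=
  τ 1 = 1 ∧ (∀ b : B, (∃ y, b = star y * y) → 0 ≤ τ b) ∧ ∀ a b : B, τ (a * b) = τ (b * a)

/-- The C*-norm on a complex star algebra (such as a matrix algebra over a C*-algebra),
defined via the spectral radius; this recovers the unique C*-norm when one exists. -/
def cstarNorm {B : Type} [Ring B] [StarRing B] [Algebra ℂ B] (a : B) : ℝ :=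
  Real.sqrt (spectralRadius ℂ (star a * a)).toReal

/-- Complete positivity of a linear map between complex star algebras: positive matrices
(i.e. those of the form `y* y`) are sent to positive matrices, at every matrix level. -/
def IsCompletelyPositive {B C : Type} [NonUnitalRing B] [StarRing B] [Module ℂ B]
    [NonUnitalRing C] [StarRing C] [Module ℂ C] (φ : B →ₗ[ℂ] C) : Prop :=
  ∀ (n : ℕ) (M : Matrix (Fin n) (Fin n) B),
    (∃ y : Matrix (Fin n) (Fin n) B, M = star y * y) →
    ∃ z : Matrix (Fin n) (Fin n) C, M.map (fun b => φ b) = star z * z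

/-! The patched map `ρ` rotates `ν₀ ⊕ 0` into `0 ⊕ vν₀v*`, exchanges this for `0 ⊕ ν₁`, which is
nearly the same over `(1/3, 2/3)`, and rotates back to `ν₁ ⊕ 0`. All three moves are carried out by
one quadratic partition of unity `∑ᵢₖ χᵢₖ² = 1`: `ρ` is the sum over `i` of the compressions of `νᵢ`
by the row `(θ(χᵢ₀), θ(χᵢ₁) uᵢ*)` with `u₀ = v`, `u₁ = 1`. Such a sum is completely positive, and it
has the right traces because the squares add up to `1`. Distinct `i` interact only through the
product `χ₀₁ χ₁₁`, where `vν₀v*` and `ν₁` are nearly equal; if they were equal, `ρ` would be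
multiplicative and `θ`-compatible, so both defects are of the order of `δ`. -/

lemma exists_pos_forall_norm_le_and_one_add_norm_le {V W : Type*} [Norm V] [Norm W]
    (S : Finset V) (T : Finset W) :
    ∃ K : ℝ, 0 < K ∧ (∀ x ∈ S, ‖x‖ ≤ K) ∧ ∀ h ∈ T, 1 + ‖h‖ ≤ K := by
  classical
  obtain ⟨K, hK⟩ := (insert 1 (S.image (‖·‖) ∪ T.image (1 + ‖·‖))).exists_le
  simp only [Finset.forall_mem_insert, Finset.forall_mem_union, Finset.forall_mem_image] at hK
  exact ⟨K, one_pos.trans_le hK.1, hK.2⟩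

section MatrixNorm

variable {ι E : Type} [Fintype ι] [CStarAlgebra E]

lemma norm_cstarMatrix_le_sum [PartialOrder E] [StarOrderedRing E] (M : CStarMatrix ι ι E) :
    ‖M‖ ≤ ∑ j, ∑ i, ‖M i j‖ := by
  rw [CStarMatrix.norm_def]
  refine (CStarMatrix.toCLM M).opNorm_le_bound (by positivity) fun v => ?_
  simp only [CStarMatrix.toCLM_apply_eq_sum, Finset.sum_mul]
  refine (WithCStarModule.pi_norm_le_sum_norm _).trans (Finset.sum_le_sum fun j _ => ?_)
  calc ‖∑ i, v i * M i j‖ ≤ ∑ i, ‖v i * M i j‖ := norm_sum_le _ _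
    _ ≤ ∑ i, ‖M i j‖ * ‖v‖ := Finset.sum_le_sum fun i _ => by
        rw [mul_comm ‖M i j‖]
        exact (norm_mul_le _ _).trans (by gcongr; exact WithCStarModule.norm_apply_le_norm v i)

variable [DecidableEq ι]

lemma cstarNorm_eq_norm_cstarMatrix [PartialOrder E] [StarOrderedRing E] (M : Matrix ι ι E) :
    cstarNorm M = ‖CStarMatrix.ofMatrix M‖ := by
  set N := CStarMatrix.ofMatrix M
  have spectralRadius_eq : spectralRadius ℂ (star M * M) = ‖star N * N‖₊ :=
    (IsSelfAdjoint.star_mul_self N).spectralRadius_eq_nnnorm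
  rw [cstarNorm, spectralRadius_eq, ENNReal.coe_toReal, coe_nnnorm,
    CStarRing.norm_star_mul_self, Real.sqrt_mul_self (norm_nonneg _)]

lemma cstarNorm_le_of_forall_norm_le {M : Matrix ι ι E} {ε : ℝ} (hM : ∀ i j, ‖M i j‖ ≤ ε) :
    cstarNorm M ≤ Fintype.card ι ^ 2 * ε := by
  let := CStarAlgebra.spectralOrder E
  have := CStarAlgebra.spectralOrderedRing E
  calc cstarNorm M = ‖CStarMatrix.ofMatrix M‖ := cstarNorm_eq_norm_cstarMatrix M
    _ ≤ ∑ j, ∑ i, ‖M i j‖ := norm_cstarMatrix_le_sum _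
    _ ≤ ∑ _j : ι, ∑ _i : ι, ε := Finset.sum_le_sum fun j _ => Finset.sum_le_sum fun i _ => hM i j
    _ = Fintype.card ι ^ 2 * ε := by simp; ring

end MatrixNorm

section CompletePositivity

lemma exists_star_mul_self_add_star_mul_self {B : Type*} [CStarAlgebra B] (y z : B) :
    ∃ w : B, star y * y + star z * z = star w * w := by
  let := CStarAlgebra.spectralOrder B
  have := CStarAlgebra.spectralOrderedRing B
  exact CStarAlgebra.nonneg_iff_eq_star_mul_self.mp
    (add_nonneg (star_mul_self_nonneg y) (star_mul_self_nonneg z))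

variable {B E ι : Type} [NonUnitalRing B] [StarRing B] [Module ℂ B]

lemma IsCompletelyPositive.add [Fintype ι] [CStarAlgebra E] {φ ψ : B →ₗ[ℂ] Matrix ι ι E}
    (hφ : IsCompletelyPositive φ) (hψ : IsCompletelyPositive ψ) :
    IsCompletelyPositive (φ + ψ) := by
  classical
  let := CStarAlgebra.spectralOrder E
  have := CStarAlgebra.spectralOrderedRing E
  intro n M hM
  obtain ⟨y, hy⟩ := hφ n M hM
  obtain ⟨z, hz⟩ := hψ n M hM
  obtain ⟨w, hw⟩ := exists_star_mul_self_add_star_mul_self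
    (B := CStarMatrix (Fin n) (Fin n) (CStarMatrix ι ι E)) y z
  exact ⟨w, (congrArg₂ (· + ·) hy hz).trans hw⟩

variable [Ring E] [StarRing E] [Algebra ℂ E]

/-- The compression `x ↦ r* ν(x) r` of a *-homomorphism `ν` into `E` by a row `r` over `E`,
with values in the matrices over `E`. -/
def compression (ν : B →⋆ₙₐ[ℂ] E) (r : ι → E) : B →ₗ[ℂ] Matrix ι ι E where
  toFun x := .of fun k l => star (r k) * ν x * r l
  map_add' x y := by ext k l; simp [mul_add, add_mul]
  map_smul' c x := by ext k l; simp

lemma compression_apply (ν : B →⋆ₙₐ[ℂ] E) (r : ι → E) (x : B) (k l : ι) :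
    compression ν r x k l = star (r k) * ν x * r l := rfl

lemma isCompletelyPositive_compression [Fintype ι] [Nonempty ι] (ν : B →⋆ₙₐ[ℂ] E) (r : ι → E) :
    IsCompletelyPositive (compression ν r) := by
  classical
  rintro n _ ⟨y, rfl⟩
  obtain ⟨k₀⟩ := ‹Nonempty ι›
  refine ⟨y.map fun b => .of fun k l => if k = k₀ then ν b * r l else 0, ?_⟩
  ext i j k l
  simp [compression_apply, Matrix.mul_apply, Matrix.sum_apply, Matrix.star_apply, map_sum,
    ← map_star, Finset.mul_sum, Finset.sum_mul, mul_assoc, apply_ite star]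

lemma compression_mul_compression_apply [Fintype ι] (ν ν' : B →⋆ₙₐ[ℂ] E) (r s : ι → E)
    (x y : B) (k l : ι) :
    (compression ν r x * compression ν' s y) k l =
      star (r k) * ν x * (∑ m, r m * star (s m)) * (ν' y * s l) := by
  simp [compression_apply, Matrix.mul_apply, Finset.mul_sum, Finset.sum_mul, mul_assoc]

lemma sum_trace_compression [Fintype ι] {M F : Type*} [AddCommMonoid M] [FunLike F E M]
    [AddMonoidHomClass F E M] {τ : F} (hτ : ∀ a b : E, τ (a * b) = τ (b * a))
    (ν : B →⋆ₙₐ[ℂ] E) (r : ι → E) (x : B) :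
    ∑ k, τ (compression ν r x k k) = τ (ν x * ∑ k, r k * star (r k)) := by
  simp only [compression_apply, mul_assoc, hτ (star _), Finset.mul_sum, map_sum]

end CompletePositivity

section Conjugation

variable {B E : Type*} [CStarAlgebra E]

lemma unitary_star_mul_cancel_left (u : unitary E) (a : E) : star (u : E) * (u * a) = a := by
  rw [← mul_assoc, Unitary.coe_star_mul_self, one_mul]

lemma norm_map_mul_sub_map_mul_map_le [NonUnitalCStarAlgebra B] (φ ψ : B →⋆ₙₐ[ℂ] E) (x y : B) :
    ‖φ (x * y) - φ x * ψ y‖ ≤ ‖x‖ * ‖φ y - ψ y‖ := by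
  rw [map_mul, ← mul_sub]
  exact (norm_mul_le _ _).trans (by gcongr; exact NonUnitalStarAlgHom.norm_apply_le φ x)

variable [NonUnitalRing B] [StarRing B] [Module ℂ B]

/-- The *-homomorphism `Ad(u) ∘ ν`, that is `x ↦ u ν(x) u*`. -/
def conjHom (u : unitary E) (ν : B →⋆ₙₐ[ℂ] E) : B →⋆ₙₐ[ℂ] E :=
  (Unitary.conjStarAlgAut ℂ E u : E →⋆ₙₐ[ℂ] E).comp ν

lemma conjHom_apply (u : unitary E) (ν : B →⋆ₙₐ[ℂ] E) (x : B) :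
    conjHom u ν x = u * ν x * star (u : E) := rfl

lemma conjHom_one (ν : B →⋆ₙₐ[ℂ] E) : conjHom 1 ν = ν := by
  ext x
  simp [conjHom_apply]

end Conjugation

section Suspension

variable {A : Type} [CStarAlgebra A]

lemma isClosed_susp : IsClosed (susp A : Set C(I, A)) :=
  (isClosed_eq (continuous_eval_const 0) continuous_const).inter
    (isClosed_eq (continuous_eval_const 1) continuous_const)

@[ext]
lemma susp_ext {x y : susp A} (h : ∀ t, (x : C(I, A)) t = (y : C(I, A)) t) : x = y :=
  Subtype.ext (ContinuousMap.ext h)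

@[simp]
lemma hsmul_apply (h : C(I, ℂ)) (x : susp A) (t : I) :
    (hsmul h x : C(I, A)) t = h t • (x : C(I, A)) t := rfl

lemma hsmul_hsmul (h k : C(I, ℂ)) (x : susp A) : hsmul h (hsmul k x) = hsmul (h * k) x := by
  ext t; simp [mul_smul]

lemma hsmul_comm (h k : C(I, ℂ)) (x : susp A) : hsmul h (hsmul k x) = hsmul k (hsmul h x) := by
  rw [hsmul_hsmul, hsmul_hsmul, mul_comm]

lemma add_hsmul (h k : C(I, ℂ)) (x : susp A) : hsmul (h + k) x = hsmul h x + hsmul k x := by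
  ext t; simp [add_smul]

lemma one_hsmul (x : susp A) : hsmul 1 x = x := by
  ext t; simp

lemma zero_hsmul (x : susp A) : hsmul 0 x = 0 := by
  ext t; simp

lemma hsmul_zero (h : C(I, ℂ)) : hsmul h (0 : susp A) = 0 := by
  ext t; simp

lemma hsmul_mul_hsmul (h k : C(I, ℂ)) (x y : susp A) :
    hsmul h x * hsmul k y = hsmul (h * k) (x * y) := by
  ext t; simp [mul_smul, smul_comm (k t) (h t)]

lemma mul_hsmul (h : C(I, ℂ)) (x y : susp A) : x * hsmul h y = hsmul h (x * y) := by
  simpa only [one_hsmul, one_mul] using hsmul_mul_hsmul 1 h x y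

lemma hsmul_eq_zero_of_support {s : Set ℝ} {h : C(I, ℂ)} {x : susp A}
    (hh : ∀ t : I, (t : ℝ) ∈ s → h t = 0) (hx : ∀ t : I, (t : ℝ) ∉ s → (x : C(I, A)) t = 0) :
    hsmul h x = 0 := by
  ext t
  by_cases ht : (t : ℝ) ∈ s
  · simp [hh t ht]
  · simp [hx t ht]

end Suspension

section Cutoff

variable {A E : Type} [CStarAlgebra A] [CStarAlgebra E]
  {θ : C(I, ℂ) →⋆ₐ[ℂ] E} {ν : susp A →⋆ₙₐ[ℂ] E}

lemma Compatible.mul_map_mul (hν : Compatible θ ν) (p q : C(I, ℂ)) (x : susp A) :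
    θ p * ν x * θ q = ν (hsmul (p * q) x) := by
  rw [← (hν p x).1, ← (hν q _).2, hsmul_hsmul, mul_comm]

lemma Compatible.norm_map_hsmul_sub_le {φ ψ : susp A →⋆ₙₐ[ℂ] E} (hψ : Compatible θ ψ)
    {h : C(I, ℂ)} {x : susp A} {δ : ℝ} (hx : ‖φ x - ψ x‖ ≤ δ)
    (hhx : ‖φ (hsmul h x) - ψ (hsmul h x)‖ ≤ δ) :
    ‖φ (hsmul h x) - θ h * φ x‖ ≤ (1 + ‖h‖) * δ :=
  calc ‖φ (hsmul h x) - θ h * φ x‖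
      = ‖(φ (hsmul h x) - ψ (hsmul h x)) - θ h * (φ x - ψ x)‖ := by
        rw [mul_sub, ← (hψ h x).1, sub_sub_sub_cancel_right]
    _ ≤ δ + ‖h‖ * δ := by
        refine (norm_sub_le _ _).trans (add_le_add hhx ((norm_mul_le _ _).trans ?_))
        gcongr
        exact NonUnitalStarAlgHom.norm_apply_le θ h
    _ = (1 + ‖h‖) * δ := by ring

variable {ι : Type}

/-- The row with entries `θ(fₖ) wₖ*`. Compressing a `θ`-compatible *-homomorphism `ν` by it cuts
`ν` down to the pieces `ν(fₖ fₗ x)` and rotates those by the unitaries `wₖ`. -/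
def cutoffRow (θ : C(I, ℂ) →⋆ₐ[ℂ] E) (f : ι → C(I, ℂ)) (w : ι → unitary E) (k : ι) : E :=
  θ (f k) * star (w k : E)

variable {f : ι → C(I, ℂ)}

lemma star_cutoffRow (hf : ∀ k, IsSelfAdjoint (f k)) (w : ι → unitary E) (k : ι) :
    star (cutoffRow θ f w k) = w k * θ (f k) := by
  rw [cutoffRow, star_mul, star_star, ← map_star, (hf k).star_eq]

lemma compression_cutoffRow_apply (hν : Compatible θ ν) (hf : ∀ k, IsSelfAdjoint (f k))
    (w : ι → unitary E) (x : susp A) (k l : ι) :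
    compression ν (cutoffRow θ f w) x k l =
      w k * ν (hsmul (f k * f l) x) * star (w l : E) := by
  rw [compression_apply, star_cutoffRow hf, cutoffRow, ← hν.mul_map_mul]
  simp only [mul_assoc]

variable [Fintype ι]

lemma sum_cutoffRow_mul_star (hf : ∀ k, IsSelfAdjoint (f k)) (w : ι → unitary E) :
    ∑ k, cutoffRow θ f w k * star (cutoffRow θ f w k) = θ (∑ k, f k * f k) := by
  rw [map_sum]
  refine Finset.sum_congr rfl fun k _ => ?_
  rw [star_cutoffRow hf, cutoffRow, map_mul, mul_assoc, unitary_star_mul_cancel_left]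

lemma compression_cutoffRow_mul_self (hν : Compatible θ ν) (hf : ∀ k, IsSelfAdjoint (f k))
    (w : ι → unitary E) (x y : susp A) :
    compression ν (cutoffRow θ f w) x * compression ν (cutoffRow θ f w) y =
      compression ν (cutoffRow θ f w) (hsmul (∑ k, f k * f k) (x * y)) := by
  ext k l
  rw [compression_mul_compression_apply, sum_cutoffRow_mul_star hf, compression_apply,
    ← mul_hsmul, map_mul, (hν _ y).1]
  simp only [mul_assoc]

end Cutoff

section Partition

/-- A quadratic partition of unity adapted to patching two maps over `(1/3, 2/3)`. The functions
`χ i 0` (outer) and `χ i 1` (inner) cut down the `i`-th map; on the left only `χ 0 0` survives, on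
the right only `χ 1 0`, and functions with distinct `i` overlap only if both are inner. -/
structure IsPatchingPartition (χ : Fin 2 → Fin 2 → C(I, ℂ)) : Prop where
  isSelfAdjoint : ∀ i k, IsSelfAdjoint (χ i k)
  mul_eq_zero : ∀ {i j k l}, i ≠ j → (k, l) ≠ (1, 1) → χ i k * χ j l = 0
  sum_mul_self : ∑ i, ∑ k, χ i k * χ i k = 1
  apply_eq_zero_of_le : ∀ {i k} {t : I}, (t : ℝ) ≤ 1 / 3 → (i, k) ≠ (0, 0) → χ i k t = 0
  apply_eq_zero_of_ge : ∀ {i k} {t : I}, 2 / 3 ≤ (t : ℝ) → (i, k) ≠ (1, 0) → χ i k t = 0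

variable {χ : Fin 2 → Fin 2 → C(I, ℂ)}

lemma IsPatchingPartition.sum_add_sum_eq_one (hχ : IsPatchingPartition χ) {i j : Fin 2}
    (hij : i ≠ j) : ∑ k, χ i k * χ i k + ∑ k, χ j k * χ j k = 1 := by
  rw [← hχ.sum_mul_self]
  fin_cases i <;> fin_cases j <;> simp_all [Fin.sum_univ_two, add_comm]

lemma IsPatchingPartition.mul_mul_sum_mul_self (hχ : IsPatchingPartition χ)
    {i j : Fin 2} (hij : i ≠ j) (k l : Fin 2) :
    χ i k * χ i l * ∑ m, χ j m * χ j m = χ i k * χ i 1 * (χ j 1 * χ j l) := by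
  have h₀₀ : χ i 0 * χ j 0 = 0 := hχ.mul_eq_zero hij (by decide)
  have h₀₁ : χ i 0 * χ j 1 = 0 := hχ.mul_eq_zero hij (by decide)
  have h₁₀ : χ i 1 * χ j 0 = 0 := hχ.mul_eq_zero hij (by decide)
  rw [Fin.sum_univ_two]
  fin_cases k <;> fin_cases l <;> grind

/-- The piecewise linear function climbing from `0` to `1` over `[(3 + i) / 9, (4 + i) / 9]`. -/
def ramp (i : ℝ) : C(I, ℝ) where
  toFun t := max 0 (min 1 (9 * (t : ℝ) - 3 - i))

lemma ramp_nonneg (i : ℝ) (t : I) : 0 ≤ ramp i t := le_max_left _ _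

lemma ramp_le_one (i : ℝ) (t : I) : ramp i t ≤ 1 := max_le zero_le_one (min_le_left _ _)

lemma antitone_ramp (t : I) : Antitone fun i => ramp i t := fun _ _ hij =>
  max_le_max_left _ (min_le_min_left _ (by linarith))

lemma ramp_eq_zero {i : ℝ} {t : I} (h : 9 * (t : ℝ) ≤ 3 + i) : ramp i t = 0 :=
  max_eq_left ((min_le_right _ _).trans (by linarith))

lemma ramp_eq_one {i : ℝ} {t : I} (h : 4 + i ≤ 9 * (t : ℝ)) : ramp i t = 1 := by
  simp [ramp, min_eq_left (show (1 : ℝ) ≤ 9 * (t : ℝ) - 3 - i by linarith)]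

lemma ramp_eq_one_or_eq_zero {i j : ℝ} (hij : i + 1 ≤ j) (t : I) : ramp i t = 1 ∨ ramp j t = 0 :=
  (le_total (4 + i) (9 * (t : ℝ))).imp ramp_eq_one fun h => ramp_eq_zero (by linarith)

/-- The squares of the functions of `patchingPartition`: the successive differences of
`1 ≥ ramp 0 ≥ ramp 1 ≥ ramp 2 ≥ 0`, of which only neighbours overlap. -/
def patchingWeight : Fin 2 → Fin 2 → C(I, ℝ) :=
  ![![1 - ramp 0, ramp 0 - ramp 1], ![ramp 2, ramp 1 - ramp 2]]

lemma patchingWeight_nonneg (i k : Fin 2) (t : I) : 0 ≤ patchingWeight i k t := by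
  have ramp_one_le : ramp 1 t ≤ ramp 0 t := antitone_ramp t zero_le_one
  have ramp_two_le : ramp 2 t ≤ ramp 1 t := antitone_ramp t one_le_two
  fin_cases i <;> fin_cases k <;>
    simp [patchingWeight, ramp_nonneg, ramp_le_one, ramp_one_le, ramp_two_le]

lemma sum_patchingWeight : ∑ i, ∑ k, patchingWeight i k = 1 := by
  simp [patchingWeight, Fin.sum_univ_two]

lemma patchingWeight_mul_eq_zero {i j k l : Fin 2} (hij : i ≠ j) (hkl : (k, l) ≠ (1, 1)) (t : I) :
    patchingWeight i k t * patchingWeight j l t = 0 := by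
  rcases ramp_eq_one_or_eq_zero (i := 0) (j := 1) (by norm_num) t with h₀ | h₁ <;>
  rcases ramp_eq_one_or_eq_zero (i := 1) (j := 2) (by norm_num) t with h₁' | h₂ <;>
  rcases ramp_eq_one_or_eq_zero (i := 0) (j := 2) (by norm_num) t with h₀' | h₂' <;>
  fin_cases i <;> fin_cases j <;> fin_cases k <;> fin_cases l <;>
  simp_all [patchingWeight]

/-- The square roots of the weights `patchingWeight`. -/
def patchingPartition (i k : Fin 2) : C(I, ℂ) :=
  ofRealCM ⟨fun t => √(patchingWeight i k t),
    Real.continuous_sqrt.comp (patchingWeight i k).continuous⟩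

lemma patchingPartition_apply (i k : Fin 2) (t : I) :
    patchingPartition i k t = (√(patchingWeight i k t) : ℝ) := rfl

lemma patchingPartition_mul_self_apply (i k : Fin 2) (t : I) :
    patchingPartition i k t * patchingPartition i k t = (patchingWeight i k t : ℝ) := by
  rw [patchingPartition_apply, ← Complex.ofReal_mul,
    Real.mul_self_sqrt (patchingWeight_nonneg i k t)]

lemma isPatchingPartition_patchingPartition : IsPatchingPartition patchingPartition where
  isSelfAdjoint i k := by
    ext t
    simp [patchingPartition_apply]
  mul_eq_zero {i j k l} hij hkl := by
    ext t
    rw [ContinuousMap.mul_apply, patchingPartition_apply, patchingPartition_apply,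
      ← Complex.ofReal_mul, ← Real.sqrt_mul (patchingWeight_nonneg i k t),
      patchingWeight_mul_eq_zero hij hkl]
    simp
  sum_mul_self := by
    ext t
    have sum_weight : ∑ i, ∑ k, patchingWeight i k t = 1 := by
      simpa using DFunLike.congr_fun sum_patchingWeight t
    simp only [ContinuousMap.sum_apply, ContinuousMap.mul_apply, patchingPartition_mul_self_apply,
      ContinuousMap.one_apply]
    exact_mod_cast sum_weight
  apply_eq_zero_of_le {i k t} ht hik := by
    have ramp_zero {j : ℝ} (hj : 0 ≤ j) : ramp j t = 0 := ramp_eq_zero (by linarith)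
    fin_cases i <;> fin_cases k <;> simp_all [patchingPartition_apply, patchingWeight]
  apply_eq_zero_of_ge {i k t} ht hik := by
    have ramp_one {j : ℝ} (hj : j ≤ 2) : ramp j t = 1 := ramp_eq_one (by linarith)
    fin_cases i <;> fin_cases k <;> simp_all [patchingPartition_apply, patchingWeight]

end Partition

section Patching

variable {A E : Type} [CStarAlgebra A] [CStarAlgebra E]
  {θ : C(I, ℂ) →⋆ₐ[ℂ] E} {ν : Fin 2 → susp A →⋆ₙₐ[ℂ] E} {χ : Fin 2 → Fin 2 → C(I, ℂ)}
  {u : Fin 2 → unitary E}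

/-- The `i`-th summand of `patchingMap`. Up to conjugation by `diag(1, uᵢ)`, it sends `x` to the
matrix with entries `νᵢ(χᵢₖ χᵢₗ x)`. -/
def patchingPiece (θ : C(I, ℂ) →⋆ₐ[ℂ] E) (χ : Fin 2 → Fin 2 → C(I, ℂ))
    (ν : Fin 2 → susp A →⋆ₙₐ[ℂ] E) (u : Fin 2 → unitary E) (i : Fin 2) :
    susp A →ₗ[ℂ] Matrix (Fin 2) (Fin 2) E :=
  compression (B := susp A) (ν i) (cutoffRow θ (χ i) ![1, u i])

/-- The patched map `ρ`. It rotates `ν 0 ⊕ 0` to `0 ⊕ Ad(u 0) ν 0`, passes over to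
`0 ⊕ Ad(u 1) ν 1`, and rotates this back to `ν 1 ⊕ 0`. Allowing a unitary on either side makes the
construction symmetric in the two maps. -/
def patchingMap (θ : C(I, ℂ) →⋆ₐ[ℂ] E) (χ : Fin 2 → Fin 2 → C(I, ℂ))
    (ν : Fin 2 → susp A →⋆ₙₐ[ℂ] E) (u : Fin 2 → unitary E) :
    susp A →ₗ[ℂ] Matrix (Fin 2) (Fin 2) E :=
  patchingPiece θ χ ν u 0 + patchingPiece θ χ ν u 1

lemma isCompletelyPositive_patchingMap (θ : C(I, ℂ) →⋆ₐ[ℂ] E) (χ : Fin 2 → Fin 2 → C(I, ℂ))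
    (ν : Fin 2 → susp A →⋆ₙₐ[ℂ] E) (u : Fin 2 → unitary E) :
    IsCompletelyPositive (B := susp A) (C := Matrix (Fin 2) (Fin 2) E) (patchingMap θ χ ν u) :=
  IsCompletelyPositive.add (B := susp A) (isCompletelyPositive_compression (B := susp A) _ _)
    (isCompletelyPositive_compression (B := susp A) _ _)

lemma patchingPiece_apply (hν : ∀ i, Compatible θ (ν i)) (hχ : IsPatchingPartition χ)
    (i : Fin 2) (x : susp A) (k l : Fin 2) :
    patchingPiece θ χ ν u i x k l =
      (![1, u i] k : E) * ν i (hsmul (χ i k * χ i l) x) * star (![1, u i] l : E) :=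
  compression_cutoffRow_apply (hν i) (hχ.isSelfAdjoint i) _ x k l

lemma patchingMap_eq_of_hsmul_eq_zero (hν : ∀ i, Compatible θ (ν i))
    (hχ : IsPatchingPartition χ) {i : Fin 2} {x : susp A}
    (hx : ∀ j k, (j, k) ≠ (i, 0) → hsmul (χ j k) x = 0) :
    patchingMap θ χ ν u x = !![ν i x, 0; 0, 0] := by
  have hsmul_of_ne (j k l : Fin 2) (h : (j, k) ≠ (i, 0)) : hsmul (χ j k * χ j l) x = 0 := by
    rw [← hsmul_hsmul, hsmul_comm, hx j k h, hsmul_zero]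
  have hsmul_outer : hsmul (χ i 0 * χ i 0) x = x := by
    conv_rhs => rw [← one_hsmul x, ← hχ.sum_mul_self]
    fin_cases i <;> simp [Fin.sum_univ_two, add_hsmul, hsmul_of_ne]
  have hsmul_of_ne' (j k l : Fin 2) (h : (j, l) ≠ (i, 0)) : hsmul (χ j k * χ j l) x = 0 := by
    rw [mul_comm, hsmul_of_ne j l k h]
  ext k l
  rw [patchingMap, LinearMap.add_apply, Matrix.add_apply, patchingPiece_apply hν hχ,
    patchingPiece_apply hν hχ]
  fin_cases i <;> fin_cases k <;> fin_cases l <;>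
    simp_all

lemma patchingMap_eq_of_support_left (hν : ∀ i, Compatible θ (ν i)) (hχ : IsPatchingPartition χ)
    {x : susp A} (hx : ∀ t : I, (t : ℝ) ∉ Set.Ioo (0 : ℝ) (1 / 3) → (x : C(I, A)) t = 0) :
    patchingMap θ χ ν u x = !![ν 0 x, 0; 0, 0] :=
  patchingMap_eq_of_hsmul_eq_zero hν hχ fun _ _ hjk =>
    hsmul_eq_zero_of_support (fun _ ht => hχ.apply_eq_zero_of_le ht.2.le hjk) hx

lemma patchingMap_eq_of_support_right (hν : ∀ i, Compatible θ (ν i)) (hχ : IsPatchingPartition χ)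
    {x : susp A} (hx : ∀ t : I, (t : ℝ) ∉ Set.Ioo (2 / 3 : ℝ) 1 → (x : C(I, A)) t = 0) :
    patchingMap θ χ ν u x = !![ν 1 x, 0; 0, 0] :=
  patchingMap_eq_of_hsmul_eq_zero hν hχ fun _ _ hjk =>
    hsmul_eq_zero_of_support (fun _ ht => hχ.apply_eq_zero_of_ge ht.1.le hjk) hx

lemma sum_trace_patchingPiece (hν : ∀ i, Compatible θ (ν i)) (hχ : IsPatchingPartition χ)
    {τ : E →L[ℂ] ℂ} (hτ : ∀ a b, τ (a * b) = τ (b * a)) (i : Fin 2) (x : susp A) :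
    ∑ k, τ (patchingPiece θ χ ν u i x k k) = τ (ν i (hsmul (∑ k, χ i k * χ i k) x)) := by
  rw [patchingPiece, sum_trace_compression hτ, sum_cutoffRow_mul_star (hχ.isSelfAdjoint i),
    (hν i _ x).2]

lemma trace_patchingMap (hν : ∀ i, Compatible θ (ν i)) (hχ : IsPatchingPartition χ)
    {τ : E →L[ℂ] ℂ} (hτ : ∀ a b, τ (a * b) = τ (b * a))
    (hτν : ∀ x, τ (ν 0 x) = τ (ν 1 x)) (x : susp A) :
    τ (patchingMap θ χ ν u x 0 0) + τ (patchingMap θ χ ν u x 1 1) = τ (ν 0 x) :=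
  calc τ (patchingMap θ χ ν u x 0 0) + τ (patchingMap θ χ ν u x 1 1)
      = ∑ k, τ (patchingPiece θ χ ν u 0 x k k) + ∑ k, τ (patchingPiece θ χ ν u 1 x k k) := by
        simp only [patchingMap, LinearMap.add_apply, Matrix.add_apply, map_add, Fin.sum_univ_two]
        ring
    _ = τ (ν 0 (hsmul (∑ k, χ 0 k * χ 0 k + ∑ k, χ 1 k * χ 1 k) x)) := by
        rw [sum_trace_patchingPiece hν hχ hτ, sum_trace_patchingPiece hν hχ hτ, ← hτν, add_hsmul,
          map_add, map_add]
    _ = τ (ν 0 x) := by rw [hχ.sum_add_sum_eq_one zero_ne_one, one_hsmul]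

lemma patchingPiece_mul_patchingPiece_apply (hν : ∀ i, Compatible θ (ν i))
    (hχ : IsPatchingPartition χ) {i j : Fin 2} (hij : i ≠ j) (x y : susp A) (k l : Fin 2) :
    (patchingPiece θ χ ν u i x * patchingPiece θ χ ν u j y) k l =
      (![1, u i] k * star (u i) : unitary E) *
        (conjHom (u i) (ν i) (hsmul (χ i k * χ i 1) x) *
          conjHom (u j) (ν j) (hsmul (χ j 1 * χ j l) y)) *
        (u j * star (![1, u j] l) : unitary E) := by
  have outer_term : ν i (hsmul (χ i k * χ i 0) x) * ν j (hsmul (χ j 0 * χ j l) y) = 0 := by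
    have outer_mul : θ (χ i 0) * θ (χ j 0) = 0 := by
      rw [← map_mul, hχ.mul_eq_zero hij (by decide), map_zero]
    rw [← (hν i).mul_map_mul, ← (hν j).mul_map_mul, mul_assoc (θ (χ j 0)), mul_assoc,
      ← mul_assoc (θ (χ i 0)), outer_mul, zero_mul, mul_zero]
  rw [Matrix.mul_apply, Fin.sum_univ_two, patchingPiece_apply hν hχ, patchingPiece_apply hν hχ,
    patchingPiece_apply hν hχ, patchingPiece_apply hν hχ]
  simp [conjHom_apply, mul_assoc, unitary_star_mul_cancel_left, ← mul_assoc (ν i _) (ν j _),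
    outer_term]

lemma patchingPiece_mul_sub_apply (hν : ∀ i, Compatible θ (ν i))
    (hχ : IsPatchingPartition χ) {i j : Fin 2} (hij : i ≠ j) (x y : susp A) (k l : Fin 2) :
    (patchingPiece θ χ ν u i (x * y) -
        patchingPiece θ χ ν u i x * patchingPiece θ χ ν u i y) k l =
      (![1, u i] k * star (u i) : unitary E) *
        conjHom (u i) (ν i) (hsmul (χ i k * χ i 1) x * hsmul (χ j 1 * χ j l) y) *
        (u j * star (![1, u j] l) : unitary E) := by
  have sub_eq : patchingPiece θ χ ν u i (x * y) -
      patchingPiece θ χ ν u i x * patchingPiece θ χ ν u i y =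
      patchingPiece θ χ ν u i (hsmul (∑ m, χ j m * χ j m) (x * y)) := by
    rw [patchingPiece, compression_cutoffRow_mul_self (hν i) (hχ.isSelfAdjoint i),
      sub_eq_iff_eq_add', ← map_add, ← add_hsmul, hχ.sum_add_sum_eq_one hij, one_hsmul]
  rw [sub_eq, patchingPiece_apply hν hχ, hsmul_hsmul, hsmul_mul_hsmul,
    hχ.mul_mul_sum_mul_self hij]
  by_cases hkl : (k, l) = (1, 1)
  · obtain ⟨rfl, rfl⟩ := Prod.mk.inj hkl
    simp [conjHom_apply, mul_assoc]
  · have cutoff_eq_zero : χ i k * χ i 1 * (χ j 1 * χ j l) = 0 := by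
      linear_combination (χ i 1 * χ j 1) * hχ.mul_eq_zero hij hkl
    simp [cutoff_eq_zero, zero_hsmul]

lemma norm_patchingPiece_mul_sub_sub_apply_le (hν : ∀ i, Compatible θ (ν i))
    (hχ : IsPatchingPartition χ) {i j : Fin 2} (hij : i ≠ j) (x y : susp A) (k l : Fin 2) :
    ‖(patchingPiece θ χ ν u i (x * y) - patchingPiece θ χ ν u i x * patchingPiece θ χ ν u i y -
        patchingPiece θ χ ν u i x * patchingPiece θ χ ν u j y) k l‖ ≤
      ‖hsmul (χ i 1 * χ i k) x‖ * ‖conjHom (u i) (ν i) (hsmul (χ j 1 * χ j l) y) -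
        conjHom (u j) (ν j) (hsmul (χ j 1 * χ j l) y)‖ := by
  have := isClosed_susp (A := A)
  rw [Matrix.sub_apply, patchingPiece_mul_sub_apply hν hχ hij,
    patchingPiece_mul_patchingPiece_apply hν hχ hij, ← sub_mul, ← mul_sub,
    CStarRing.norm_mul_coe_unitary, CStarRing.norm_coe_unitary_mul, mul_comm (χ i 1)]
  exact norm_map_mul_sub_map_mul_map_le (B := susp A) _ _ _ _

lemma norm_patchingPiece_hsmul_sub_apply_le (hν : ∀ i, Compatible θ (ν i))
    (hχ : IsPatchingPartition χ) (i : Fin 2) (h : C(I, ℂ)) (x : susp A) (k l : Fin 2) :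
    ‖patchingPiece θ χ ν u i (hsmul h x) k l - θ h * patchingPiece θ χ ν u i x k l‖ ≤
      ‖conjHom (u i) (ν i) (hsmul h (hsmul (χ i 1 * χ i l) x)) -
        θ h * conjHom (u i) (ν i) (hsmul (χ i 1 * χ i l) x)‖ := by
  rw [patchingPiece_apply hν hχ, patchingPiece_apply hν hχ, hsmul_comm]
  match k with
  | 0 => simp [(hν i h _).1, mul_assoc]
  | 1 =>
    conv_rhs => rw [← CStarRing.norm_mul_coe_unitary _ (u i * star (![1, u i] l))]
    simp [conjHom_apply, sub_mul, mul_assoc, unitary_star_mul_cancel_left]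

section TestElements

open Classical in
/-- The cut-downs of `x` on which the `θ`-compatible maps must agree for `patchingMap` to behave
well at `x`. Each involves an inner cutoff, so they all live over `(1/3, 2/3)`. -/
def innerCutoffs (χ : Fin 2 → Fin 2 → C(I, ℂ)) (x : susp A) : Finset (susp A) :=
  Finset.univ.image fun p : Fin 2 × Fin 2 => hsmul (χ p.1 1 * χ p.1 p.2) x

lemma mem_innerCutoffs {x z : susp A} :
    z ∈ innerCutoffs χ x ↔ ∃ i k, hsmul (χ i 1 * χ i k) x = z := by
  simp [innerCutoffs]

lemma hsmul_mem_innerCutoffs (i k : Fin 2) (x : susp A) :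
    hsmul (χ i 1 * χ i k) x ∈ innerCutoffs χ x :=
  mem_innerCutoffs.mpr ⟨i, k, rfl⟩

lemma apply_eq_zero_of_mem_innerCutoffs (hχ : IsPatchingPartition χ) {x z : susp A}
    (hz : z ∈ innerCutoffs χ x) {t : I} (ht : (t : ℝ) ∉ Set.Ioo (1 / 3 : ℝ) (2 / 3)) :
    (z : C(I, A)) t = 0 := by
  obtain ⟨i, k, rfl⟩ := mem_innerCutoffs.mp hz
  have inner_eq_zero : χ i 1 t = 0 := by
    rcases not_and_or.mp ht with hle | hge
    · exact hχ.apply_eq_zero_of_le (not_lt.mp hle) (by simp)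
    · exact hχ.apply_eq_zero_of_ge (not_lt.mp hge) (by simp)
  simp [inner_eq_zero]

open Classical in
/-- The test elements for the patching problem with prescribed finite sets `F` and `F'`. -/
def patchingTestSet (χ : Fin 2 → Fin 2 → C(I, ℂ)) (F : Finset (susp A)) (F' : Finset C(I, ℂ)) :
    Finset (susp A) :=
  (F ∪ Finset.image₂ hsmul F' F).biUnion (innerCutoffs χ)

variable {F : Finset (susp A)} {F' : Finset C(I, ℂ)}

lemma innerCutoffs_subset_patchingTestSet {x : susp A} (hx : x ∈ F) :
    innerCutoffs χ x ⊆ patchingTestSet χ F F' := by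
  classical
  exact Finset.subset_biUnion_of_mem _ (Finset.mem_union_left _ hx)

lemma innerCutoffs_hsmul_subset_patchingTestSet {h : C(I, ℂ)} (hh : h ∈ F') {x : susp A}
    (hx : x ∈ F) : innerCutoffs χ (hsmul h x) ⊆ patchingTestSet χ F F' := by
  classical
  exact Finset.subset_biUnion_of_mem _
    (Finset.mem_union_right _ (Finset.mem_image₂_of_mem hh hx))

lemma apply_eq_zero_of_mem_patchingTestSet (hχ : IsPatchingPartition χ) {z : susp A}
    (hz : z ∈ patchingTestSet χ F F') {t : I} (ht : (t : ℝ) ∉ Set.Ioo (1 / 3 : ℝ) (2 / 3)) :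
    (z : C(I, A)) t = 0 := by
  classical
  obtain ⟨x, -, hzx⟩ := Finset.mem_biUnion.mp hz
  exact apply_eq_zero_of_mem_innerCutoffs hχ hzx ht

end TestElements

lemma cstarNorm_patchingMap_mul_sub_le (hν : ∀ i, Compatible θ (ν i))
    (hχ : IsPatchingPartition χ) {x y : susp A} {K δ : ℝ}
    (hx : ∀ z ∈ innerCutoffs χ x, ‖z‖ ≤ K)
    (hy : ∀ z ∈ innerCutoffs χ y, ‖conjHom (u 0) (ν 0) z - conjHom (u 1) (ν 1) z‖ ≤ δ) :
    cstarNorm (patchingMap θ χ ν u (x * y) - patchingMap θ χ ν u x * patchingMap θ χ ν u y) ≤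
      8 * (K * δ) := by
  set P := patchingPiece θ χ ν u
  have hK : 0 ≤ K := (norm_nonneg _).trans (hx _ (hsmul_mem_innerCutoffs 0 0 x))
  have cross_le {i j : Fin 2} (hij : i ≠ j) (k l : Fin 2) :
      ‖(P i (x * y) - P i x * P i y - P i x * P j y) k l‖ ≤ K * δ := by
    refine (norm_patchingPiece_mul_sub_sub_apply_le hν hχ hij x y k l).trans
      (mul_le_mul (hx _ (hsmul_mem_innerCutoffs i k x)) ?_ (norm_nonneg _) hK)
    have hz := hy _ (hsmul_mem_innerCutoffs j l y)
    match i, j with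
    | 0, 0 => exact absurd rfl hij
    | 0, 1 => exact hz
    | 1, 0 => rwa [norm_sub_rev]
    | 1, 1 => exact absurd rfl hij
  have error_eq : patchingMap θ χ ν u (x * y) - patchingMap θ χ ν u x * patchingMap θ χ ν u y =
      (P 0 (x * y) - P 0 x * P 0 y - P 0 x * P 1 y) +
        (P 1 (x * y) - P 1 x * P 1 y - P 1 x * P 0 y) := by
    simp only [patchingMap, LinearMap.add_apply]
    noncomm_ring
  rw [error_eq]
  refine (cstarNorm_le_of_forall_norm_le (ε := K * δ + K * δ) fun k l => ?_).trans_eq ?_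
  · exact (norm_add_le _ _).trans
      (add_le_add (cross_le zero_ne_one k l) (cross_le one_ne_zero k l))
  · rw [Fintype.card_fin]
    push_cast
    ring

lemma cstarNorm_patchingMap_hsmul_sub_le (hν : ∀ i, Compatible θ (ν i))
    (hχ : IsPatchingPartition χ) (hu : Compatible θ (conjHom (B := susp A) (u 1) (ν 1)))
    {h : C(I, ℂ)} {x : susp A} {δ : ℝ}
    (hx : ∀ z ∈ innerCutoffs χ x, ‖conjHom (u 0) (ν 0) z - conjHom (u 1) (ν 1) z‖ ≤ δ)
    (hhx : ∀ z ∈ innerCutoffs χ (hsmul h x),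
      ‖conjHom (u 0) (ν 0) z - conjHom (u 1) (ν 1) z‖ ≤ δ) :
    cstarNorm (patchingMap θ χ ν u (hsmul h x) -
      Matrix.diagonal (fun _ => θ h) * patchingMap θ χ ν u x) ≤ 8 * ((1 + ‖h‖) * δ) := by
  set P := patchingPiece θ χ ν u
  have close_one (i : Fin 2) {z : susp A}
      (hz : ‖conjHom (u 0) (ν 0) z - conjHom (u 1) (ν 1) z‖ ≤ δ) :
      ‖conjHom (u i) (ν i) z - conjHom (u 1) (ν 1) z‖ ≤ δ :=
    match i with
    | 0 => hz
    | 1 => by simpa using (norm_nonneg _).trans hz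
  have piece_le (i k l : Fin 2) : ‖P i (hsmul h x) k l - θ h * P i x k l‖ ≤ (1 + ‖h‖) * δ := by
    refine (norm_patchingPiece_hsmul_sub_apply_le hν hχ i h x k l).trans
      (hu.norm_map_hsmul_sub_le (close_one i (hx _ (hsmul_mem_innerCutoffs i l x))) ?_)
    rw [hsmul_comm]
    exact close_one i (hhx _ (hsmul_mem_innerCutoffs i l _))
  refine (cstarNorm_le_of_forall_norm_le (ε := (1 + ‖h‖) * δ + (1 + ‖h‖) * δ)
    fun k l => ?_).trans_eq ?_
  · rw [Matrix.sub_apply, Matrix.diagonal_mul, patchingMap, LinearMap.add_apply,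
      LinearMap.add_apply, Matrix.add_apply, Matrix.add_apply, mul_add, add_sub_add_comm]
    exact (norm_add_le _ _).trans (add_le_add (piece_le 0 k l) (piece_le 1 k l))
  · rw [Fintype.card_fin]
    push_cast
    ring

end Patching

/-- **Approximate patching** (Remark 4.2 of Tikuisis–White–Winter). Given finite sets
`F ⊂ C₀((0,1),A)`, `F' ⊂ C([0,1])` and a tolerance `η > 0`, there are a finite set
`G ⊂ C₀((1/3,2/3),A)` and `δ > 0` such that whenever `ν₀, ν₁ : C₀((0,1),A) → E` are
`θ`-compatible *-homomorphisms and `v` is a unitary with `‖v ν₀(x) v* − ν₁(x)‖ ≤ δ` on `G`,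
there is a completely positive `ρ : C₀((0,1),A) → M₂(E)` recovering `ν₀ ⊕ 0` on `(0,1/3)`,
`ν₁ ⊕ 0` on `(2/3,1)`, matching traces, and `η`-multiplicative on `F` and `η`-compatible with
`θ^{⊕2}` on `F × F'`. -/
theorem approximate_patching {A : Type} [CStarAlgebra A]
    (F : Finset ↥(susp A)) (F' : Finset C(I, ℂ)) (η : ℝ) (hη : 0 < η) :
    ∃ G : Finset ↥(susp A),
      (∀ x ∈ G, ∀ t : I, (t : ℝ) ∉ Set.Ioo (1/3 : ℝ) (2/3) → (x : C(I, A)) t = 0) ∧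
      ∃ δ : ℝ, 0 < δ ∧
        ∀ (E : Type) [CStarAlgebra E],
          ∀ (θ : C(I, ℂ) →⋆ₐ[ℂ] E) (ν₀ ν₁ : susp A →⋆ₙₐ[ℂ] E) (v : E),
            Compatible θ ν₀ → Compatible θ ν₁ → v ∈ unitary E →
            (∀ x ∈ G, ‖v * ν₀ x * star v - ν₁ x‖ ≤ δ) →
            ∃ ρ : susp A →ₗ[ℂ] Matrix (Fin 2) (Fin 2) E,
              IsCompletelyPositive (B := susp A) (C := Matrix (Fin 2) (Fin 2) E) ρ ∧
              -- (i)
              (∀ x : susp A,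
                (∀ t : I, (t : ℝ) ∉ Set.Ioo (0 : ℝ) (1/3) → (x : C(I, A)) t = 0) →
                ρ x = !![ν₀ x, 0; 0, 0]) ∧
              -- (ii)
              (∀ x : susp A,
                (∀ t : I, (t : ℝ) ∉ Set.Ioo (2/3 : ℝ) 1 → (x : C(I, A)) t = 0) →
                ρ x = !![ν₁ x, 0; 0, 0]) ∧
              -- (iii)
              (∀ τ : E →L[ℂ] ℂ, IsTracialState τ → (∀ x : susp A, τ (ν₀ x) = τ (ν₁ x)) →
                ∀ x : susp A, τ (ρ x 0 0) + τ (ρ x 1 1) = τ (ν₀ x)) ∧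
              -- (iv)
              (∀ x ∈ F, ∀ y ∈ F, cstarNorm (ρ (x * y) - ρ x * ρ y) ≤ η) ∧
              -- (v)
              (∀ x ∈ F, ∀ h ∈ F',
                cstarNorm (ρ (hsmul h x) - Matrix.diagonal (fun _ => θ h) * ρ x) ≤ η) := by
  have hχ := isPatchingPartition_patchingPartition
  set G := patchingTestSet patchingPartition F F'
  obtain ⟨K, hK, norm_le, one_add_norm_le⟩ := exists_pos_forall_norm_le_and_one_add_norm_le G F'
  refine ⟨G, fun z hz t ht => apply_eq_zero_of_mem_patchingTestSet hχ hz ht, η / (8 * K),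
    by positivity, fun E _ θ ν₀ ν₁ v hν₀ hν₁ hv hG => ?_⟩
  lift v to unitary E using hv
  have hν : ∀ i, Compatible θ (![ν₀, ν₁] i) := Fin.forall_fin_two.mpr ⟨hν₀, hν₁⟩
  have conj_one : conjHom (B := susp A) (1 : unitary E) ν₁ = ν₁ := conjHom_one (B := susp A) ν₁
  have close : ∀ z ∈ G, ‖conjHom (B := susp A) (![v, 1] 0) (![ν₀, ν₁] 0) z -
      conjHom (B := susp A) (![v, 1] 1) (![ν₀, ν₁] 1) z‖ ≤ η / (8 * K) := by
    simpa [conj_one, conjHom_apply (B := susp A)] using hG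
  have hδ : 8 * (K * (η / (8 * K))) = η := by field_simp
  refine ⟨patchingMap θ patchingPartition ![ν₀, ν₁] ![v, 1],
    isCompletelyPositive_patchingMap _ _ _ _,
    fun x hx => patchingMap_eq_of_support_left hν hχ hx,
    fun x hx => patchingMap_eq_of_support_right hν hχ hx,
    fun τ hτ hτν => trace_patchingMap hν hχ hτ.2.2 hτν, fun x hx y hy => ?_, fun x hx h hh => ?_⟩
  · exact (cstarNorm_patchingMap_mul_sub_le (u := ![v, 1]) hν hχ
      (fun z hz => norm_le z (innerCutoffs_subset_patchingTestSet hx hz))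
      fun z hz => close z (innerCutoffs_subset_patchingTestSet hy hz)).trans_eq hδ
  · refine (cstarNorm_patchingMap_hsmul_sub_le hν hχ (u := ![v, 1]) (by simpa [conj_one] using hν₁)
      (fun z hz => close z (innerCutoffs_subset_patchingTestSet hx hz)) fun z hz =>
        close z (innerCutoffs_hsmul_subset_patchingTestSet hh hx hz)).trans (le_of_le_of_eq ?_ hδ)
    gcongr
    exact one_add_norm_le h hh
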